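/- Let n ≥ 1, m ≥ 1, let D and A be n×n real matrices, B an n×m real matrix, let (λ_i)_{i∈ℕ} be a strictly increasing sequence of positive real numbers tending to +∞, and let k ≥ (n−1)² be an integer. Then the following are equivalent: (i) rank [λ_i·D − A | B] = n for every i; (ii) there exists R > 0 such that for every finitely supported sequence a : ℕ → ℝⁿ one has Σ_i ‖a_i‖² ≤ R · Σ_i λ_i^{2k} ‖([λ_i·D − A | B])ᵀ a_i‖². -/

import Mathlib

open Matrix

/-- The Kalman matrix `[M|B] = (M^{n-1}B | M^{n-2}B | ⋯ | MB | B)`. -/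
def kalman {n m : ℕ} (M : Matrix (Fin n) (Fin n) ℝ) (B : Matrix (Fin n) (Fin m) ℝ) :
    Matrix (Fin n) (Fin n × Fin m) ℝ :=
  fun i p => (M ^ (n - 1 - (p.1 : ℕ)) * B) i p.2

/-!
The entries of `[tD - A|B]` are polynomials in `t` of degree at most `n - 1`. If the rank is `n` at
some `t₀`, a maximal minor is a nonzero polynomial `δ(t)`, and Cramer's rule bounds `δ(t) a` by the
adjugate of that minor, whose entries have degree at most `(n - 1)²`, applied to part of
`[tD - A|B]ᵀ a`. As `|δ(t)|` stays away from `0` for large `|t|`, this gives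
`‖a‖ ≤ C |t|^k ‖[tD - A|B]ᵀ a‖` there. Only finitely many `λ i` are not large, and for each of them
full rank alone gives such an inequality.
-/

section PolynomialMatrix

open Polynomial

variable {R l n p : Type*} [Fintype n] {d e : ℕ}

lemma natDegree_matrix_mul_apply_le [Semiring R] {M : Matrix l n R[X]} {N : Matrix n p R[X]}
    (hM : ∀ i j, (M i j).natDegree ≤ d) (hN : ∀ i j, (N i j).natDegree ≤ e) (i : l) (j : p) :
    ((M * N) i j).natDegree ≤ d + e := by
  rw [Matrix.mul_apply]
  exact natDegree_sum_le_of_forall_le _ _ fun x _ => natDegree_mul_le_of_le (hM i x) (hN x j)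

variable [DecidableEq n]

lemma natDegree_matrix_pow_apply_le [Semiring R] {M : Matrix n n R[X]}
    (hM : ∀ i j, (M i j).natDegree ≤ d) (k : ℕ) (i j : n) :
    ((M ^ k) i j).natDegree ≤ k * d := by
  induction k generalizing i j with
  | zero =>
    rw [pow_zero, Matrix.one_apply]
    split_ifs <;> simp
  | succ k ih =>
    rw [pow_succ, add_one_mul]
    exact natDegree_matrix_mul_apply_le ih hM i j

variable [CommRing R]

lemma natDegree_det_le_sum {M : Matrix n n R[X]} {d : n → ℕ}
    (hM : ∀ i j, (M i j).natDegree ≤ d i) : M.det.natDegree ≤ ∑ i, d i := by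
  rw [Matrix.det_apply]
  refine natDegree_sum_le_of_forall_le _ _ fun σ _ => (natDegree_smul_le _ _).trans ?_
  calc (∏ i, M (σ i) i).natDegree
      ≤ ∑ i, (M (σ i) i).natDegree := natDegree_prod_le _ _
    _ ≤ ∑ i, d (σ i) := Finset.sum_le_sum fun i _ => hM (σ i) i
    _ = ∑ i, d i := Equiv.sum_comp σ d

lemma natDegree_adjugate_apply_le {M : Matrix n n R[X]} (hM : ∀ i j, (M i j).natDegree ≤ d)
    (i j : n) : (M.adjugate i j).natDegree ≤ (Fintype.card n - 1) * d := by
  have hrow (i' j' : n) : (M.updateRow j (Pi.single i 1) i' j').natDegree ≤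
      Function.update (fun _ => d) j 0 i' := by
    rcases eq_or_ne i' j with rfl | h
    · rw [Matrix.updateRow_self, Pi.single_apply]
      split_ifs <;> simp
    · simpa only [Matrix.updateRow_ne h, Function.update_of_ne h] using hM i' j'
  rw [Matrix.adjugate_apply]
  refine (natDegree_det_le_sum hrow).trans_eq ?_
  rw [Finset.sum_update_of_mem (Finset.mem_univ j), Finset.sum_const,
    Finset.card_sdiff_of_subset (Finset.subset_univ _), Finset.card_univ, Finset.card_singleton,
    smul_eq_mul, zero_add]

end PolynomialMatrix

lemma exists_embedding_det_submatrix_ne_zero {K ι n : Type*} [Field K] [Finite ι] [Fintype n]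
    [DecidableEq n] {L : Matrix ι n K} (hL : L.rank = Fintype.card n) :
    ∃ f : n ↪ ι, (L.submatrix f id).det ≠ 0 := by
  obtain ⟨κ, g, hg, hspan, hli⟩ := exists_linearIndependent' K L.row
  have : Finite κ := Finite.of_injective g hg
  have := Fintype.ofFinite κ
  have hcard : Fintype.card n = Fintype.card κ := by
    rw [← hL, L.rank_eq_finrank_span_row, ← hspan, finrank_span_eq_card hli]
  let e : n ≃ κ := Fintype.equivOfCardEq hcard
  refine ⟨e.toEmbedding.trans ⟨g, hg⟩, ?_⟩
  rw [← isUnit_iff_ne_zero, ← Matrix.isUnit_iff_isUnit_det,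
    ← Matrix.linearIndependent_rows_iff_isUnit]
  exact hli.comp e e.injective

section SumSq

variable {R ι n : Type*} [Fintype ι] [Fintype n] [CommRing R] [LinearOrder R]
  [IsStrictOrderedRing R]

lemma sum_sq_mulVec_le (M : Matrix ι n R) (v : n → R) :
    ∑ i, (M *ᵥ v) i ^ 2 ≤ (∑ i, ∑ j, M i j ^ 2) * ∑ j, v j ^ 2 := by
  rw [Finset.sum_mul]
  exact Finset.sum_le_sum fun i _ => Finset.sum_mul_sq_le_sq_mul_sq _ _ _

variable [DecidableEq n]

lemma det_sq_mul_sum_sq_le (M : Matrix n n R) (v : n → R) :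
    M.det ^ 2 * ∑ i, v i ^ 2 ≤ (∑ i, ∑ j, M.adjugate i j ^ 2) * ∑ i, (M *ᵥ v) i ^ 2 := by
  have cramer : M.adjugate *ᵥ (M *ᵥ v) = M.det • v := by
    rw [Matrix.mulVec_mulVec, Matrix.adjugate_mul, Matrix.smul_mulVec, Matrix.one_mulVec]
  simpa only [cramer, Pi.smul_apply, smul_eq_mul, mul_pow, ← Finset.mul_sum] using
    sum_sq_mulVec_le M.adjugate (M *ᵥ v)

lemma det_submatrix_sq_mul_sum_sq_le (L : Matrix ι n R) (f : n ↪ ι) (v : n → R) :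
    (L.submatrix f id).det ^ 2 * ∑ i, v i ^ 2 ≤
      (∑ i, ∑ j, (L.submatrix f id).adjugate i j ^ 2) * ∑ i, (L *ᵥ v) i ^ 2 := by
  refine (det_sq_mul_sum_sq_le _ v).trans (mul_le_mul_of_nonneg_left ?_ (by positivity))
  calc ∑ i, (L.submatrix f id *ᵥ v) i ^ 2
      = ∑ i ∈ Finset.univ.map f, (L *ᵥ v) i ^ 2 :=
        (Finset.sum_map _ f fun i => (L *ᵥ v) i ^ 2).symm
    _ ≤ ∑ i, (L *ᵥ v) i ^ 2 := Finset.sum_le_univ_sum_of_nonneg fun _ => sq_nonneg _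

end SumSq

lemma rank_eq_card_iff_exists_sum_sq_le {K ι n : Type*} [Fintype ι] [Fintype n] [Field K]
    [LinearOrder K] [IsStrictOrderedRing K] {L : Matrix ι n K} :
    L.rank = Fintype.card n ↔ ∃ c, ∀ v, ∑ i, v i ^ 2 ≤ c * ∑ i, (L *ᵥ v) i ^ 2 := by
  classical
  constructor
  · intro hL
    obtain ⟨f, hf⟩ := exists_embedding_det_submatrix_ne_zero hL
    refine ⟨(∑ i, ∑ j, (L.submatrix f id).adjugate i j ^ 2) / (L.submatrix f id).det ^ 2,
      fun v => ?_⟩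
    rw [div_mul_eq_mul_div, le_div_iff₀' (by positivity)]
    exact det_submatrix_sq_mul_sum_sq_le L f v
  · rintro ⟨c, hc⟩
    have hker (v : n → K) (hv : L *ᵥ v = 0) : v = 0 := by
      have hsum : ∑ i, v i ^ 2 ≤ 0 := by simpa [hv] using hc v
      funext i
      have hle : v i ^ 2 ≤ 0 :=
        (Finset.single_le_sum (fun j _ => sq_nonneg (v j)) (Finset.mem_univ i)).trans hsum
      exact pow_eq_zero_iff two_ne_zero |>.mp (hle.antisymm (sq_nonneg _))
    have hinj : Function.Injective L.mulVec :=
      (injective_iff_map_eq_zero L.mulVecLin).mpr hker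
    rw [← Matrix.rank_transpose]
    exact (Matrix.mulVec_injective_iff.mp hinj).rank_matrix

lemma rank_eq_card_iff_exists_sum_sq_le_mul {K ι n : Type*} [Fintype ι] [Fintype n] [Field K]
    [LinearOrder K] [IsStrictOrderedRing K] {L : Matrix ι n K} {w : K} (hw : w ≠ 0) :
    L.rank = Fintype.card n ↔ ∃ c, ∀ v, ∑ i, v i ^ 2 ≤ c * (w * ∑ i, (L *ᵥ v) i ^ 2) := by
  simp only [rank_eq_card_iff_exists_sum_sq_le, ← mul_assoc]
  exact (mul_right_surjective₀ hw).exists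

section LargeParameter

open Polynomial Filter Bornology

variable {ι n : Type*} [Fintype n] {d k : ℕ}

lemma exists_eventually_sum_sq_eval_adjugate_le [DecidableEq n] {Q : Matrix n n ℝ[X]}
    (hQ : ∀ i j, (Q i j).natDegree ≤ d) (hdet : Q.det ≠ 0) (hk : (Fintype.card n - 1) * d ≤ k) :
    ∃ C, ∀ᶠ t in cobounded ℝ, ∑ i, ∑ j, (Q.adjugate i j).eval t ^ 2 ≤
      C * (t ^ (2 * k) * Q.det.eval t ^ 2) := by
  let S : ℝ[X] := ∑ i, ∑ j, Q.adjugate i j ^ 2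
  have natDegree_S : S.natDegree ≤ 2 * k :=
    natDegree_sum_le_of_forall_le _ _ fun i _ => natDegree_sum_le_of_forall_le _ _ fun j _ =>
      natDegree_pow_le_of_le 2 ((natDegree_adjugate_apply_le hQ i j).trans hk)
  have degree_S : S.degree ≤ (X ^ (2 * k) * Q.det ^ 2).degree := by
    rw [degree_mul, degree_X_pow]
    exact (degree_le_of_natDegree_le natDegree_S).trans
      (le_add_of_nonneg_right (zero_le_degree_iff.mpr (pow_ne_zero 2 hdet)))
  obtain ⟨C, hC⟩ := (isBigO_cobounded_of_degree_le degree_S).bound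
  refine ⟨C, hC.mono fun t ht => ?_⟩
  have hnonneg : 0 ≤ t ^ (2 * k) * Q.det.eval t ^ 2 :=
    mul_nonneg ((even_two_mul k).pow_nonneg t) (sq_nonneg _)
  simp only [S, eval_finsetSum, eval_mul, eval_pow, eval_X, Real.norm_of_nonneg hnonneg] at ht
  exact (Real.le_norm_self _).trans ht

lemma exists_eventually_sum_sq_le_of_rank_map_eval [Fintype ι] {P : Matrix ι n ℝ[X]}
    (hP : ∀ i j, (P i j).natDegree ≤ d) {t₀ : ℝ}
    (hrank : (P.map (eval t₀)).rank = Fintype.card n) (hk : (Fintype.card n - 1) * d ≤ k) :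
    ∃ C, ∀ᶠ t in cobounded ℝ, ∀ v,
      ∑ i, v i ^ 2 ≤ C * (t ^ (2 * k) * ∑ i, (P.map (eval t) *ᵥ v) i ^ 2) := by
  classical
  obtain ⟨f, hf⟩ := exists_embedding_det_submatrix_ne_zero hrank
  let Q := P.submatrix f id
  have det_eval (t : ℝ) : ((P.map (eval t)).submatrix f id).det = Q.det.eval t :=
    ((evalRingHom t).map_det Q).symm
  have adjugate_eval (t : ℝ) (i j : n) :
      ((P.map (eval t)).submatrix f id).adjugate i j = (Q.adjugate i j).eval t :=
    (congr_fun₂ ((evalRingHom t).map_adjugate Q) i j).symm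
  have hdet : Q.det ≠ 0 := fun h => hf (by rw [det_eval, h, eval_zero])
  obtain ⟨C, hC⟩ :=
    exists_eventually_sum_sq_eval_adjugate_le (Q := Q) (fun i j => hP (f i) j) hdet hk
  refine ⟨C, ?_⟩
  filter_upwards [hC, le_cofinite ℝ (eventually_cofinite_not_isRoot hdet)] with t ht hroot v
  have hdet_sq : 0 < Q.det.eval t ^ 2 := sq_pos_of_ne_zero hroot
  refine le_of_mul_le_mul_left ?_ hdet_sq
  calc Q.det.eval t ^ 2 * ∑ i, v i ^ 2
      ≤ (∑ i, ∑ j, (Q.adjugate i j).eval t ^ 2) * ∑ i, (P.map (eval t) *ᵥ v) i ^ 2 := by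
        simpa only [det_eval, adjugate_eval] using
          det_submatrix_sq_mul_sum_sq_le (P.map (eval t)) f v
    _ ≤ C * (t ^ (2 * k) * Q.det.eval t ^ 2) * ∑ i, (P.map (eval t) *ᵥ v) i ^ 2 := by gcongr
    _ = Q.det.eval t ^ 2 * (C * (t ^ (2 * k) * ∑ i, (P.map (eval t) *ᵥ v) i ^ 2)) := by ring

end LargeParameter

section KalmanPencil

open Polynomial

variable {n m : ℕ}

/-- The Kalman matrix `[XD - A|B]` over `ℝ[X]`, whose value at `X = t` is `kalman (t • D - A) B`. It
is used to bound the minors of the latter as polynomials in `t`. -/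
noncomputable def kalmanPencil (D A : Matrix (Fin n) (Fin n) ℝ) (B : Matrix (Fin n) (Fin m) ℝ) :
    Matrix (Fin n) (Fin n × Fin m) ℝ[X] :=
  fun i p => (((X : ℝ[X]) • D.map C - A.map C) ^ (n - 1 - (p.1 : ℕ)) * B.map C) i p.2

variable (D A : Matrix (Fin n) (Fin n) ℝ) (B : Matrix (Fin n) (Fin m) ℝ)

lemma kalmanPencil_map_eval (t : ℝ) :
    (kalmanPencil D A B).map (eval t) = kalman (t • D - A) B := by
  let M : Matrix (Fin n) (Fin n) ℝ[X] := (X : ℝ[X]) • D.map C - A.map C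
  have M_eval : M.map (evalRingHom t) = t • D - A := by
    ext i j
    simp only [M, Matrix.map_apply, Matrix.sub_apply, Matrix.smul_apply, smul_eq_mul,
      coe_evalRingHom, eval_sub, eval_mul, eval_X, eval_C]
  have B_eval : (B.map C).map (evalRingHom t) = B := by
    ext i j
    simp only [Matrix.map_apply, coe_evalRingHom, eval_C]
  ext i p
  calc (kalmanPencil D A B).map (eval t) i p
      = (M ^ (n - 1 - (p.1 : ℕ)) * B.map C).map (evalRingHom t) i p.2 := rfl
    _ = kalman (t • D - A) B i p := by
        rw [Matrix.map_mul, Matrix.map_pow, M_eval, B_eval, kalman]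

lemma natDegree_kalmanPencil_apply_le (i : Fin n) (p : Fin n × Fin m) :
    (kalmanPencil D A B i p).natDegree ≤ n - 1 := by
  have pencil_le (i j : Fin n) : (((X : ℝ[X]) • D.map C - A.map C) i j).natDegree ≤ 1 := by
    simp only [Matrix.sub_apply, Matrix.smul_apply, Matrix.map_apply, smul_eq_mul]
    compute_degree
  have B_le (i : Fin n) (j : Fin m) : (B.map C i j).natDegree ≤ 0 := (natDegree_C _).le
  calc (kalmanPencil D A B i p).natDegree
      ≤ (n - 1 - p.1) * 1 + 0 :=
        natDegree_matrix_mul_apply_le (natDegree_matrix_pow_apply_le pencil_le _) B_le i p.2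
    _ ≤ n - 1 := by omega

variable {D A B}

lemma exists_eventually_sum_sq_le_of_rank_kalman {t₀ : ℝ}
    (hrank : (kalman (t₀ • D - A) B).rank = n) {k : ℕ} (hk : (n - 1) ^ 2 ≤ k) :
    ∃ C, ∀ᶠ t in Bornology.cobounded ℝ, ∀ v, ∑ x, v x ^ 2 ≤
      C * (t ^ (2 * k) * ∑ y, ((kalman (t • D - A) B)ᵀ *ᵥ v) y ^ 2) := by
  have map_eval_transpose (t : ℝ) :
      (kalmanPencil D A B)ᵀ.map (eval t) = (kalman (t • D - A) B)ᵀ := by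
    rw [Matrix.transpose_map, kalmanPencil_map_eval]
  simp only [← map_eval_transpose]
  refine exists_eventually_sum_sq_le_of_rank_map_eval (d := n - 1) (t₀ := t₀)
    (fun p i => natDegree_kalmanPencil_apply_le D A B i p) ?_ ?_
  · rw [map_eval_transpose, Matrix.rank_transpose, hrank, Fintype.card_fin]
  · rwa [Fintype.card_fin, ← sq]

end KalmanPencil

lemma forall_finite_support_tsum_le_iff {ι E : Type*} [Zero E] {q r : ι → E → ℝ}
    (hq : ∀ i, q i 0 = 0) (hr : ∀ i, r i 0 = 0) (c : ℝ) :
    (∀ a : ι → E, (Function.support a).Finite → ∑' i, q i (a i) ≤ c * ∑' i, r i (a i)) ↔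
      ∀ i v, q i v ≤ c * r i v := by
  classical
  constructor
  · intro h i v
    have hi := h (Pi.single i v) (Set.toFinite _ |>.subset Pi.support_single_subset)
    rwa [tsum_eq_single i fun j hj => by rw [Pi.single_eq_of_ne hj, hq],
      tsum_eq_single i fun j hj => by rw [Pi.single_eq_of_ne hj, hr], Pi.single_eq_same] at hi
  · intro h a ha
    have hzero (i : ι) (hi : i ∉ ha.toFinset) : a i = 0 := by simpa using hi
    rw [tsum_eq_sum fun i hi => by rw [hzero i hi, hq],
      tsum_eq_sum fun i hi => by rw [hzero i hi, hr], Finset.mul_sum]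
    exact Finset.sum_le_sum fun i _ => h i (a i)

lemma exists_pos_forall_of_eventually_cofinite {ι : Type*} {p : ι → ℝ → Prop}
    (hp : ∀ i, Monotone (p i)) (hlarge : ∃ c, ∀ᶠ i in Filter.cofinite, p i c)
    (hall : ∀ i, ∃ c, p i c) : ∃ c > 0, ∀ i, p i c := by
  obtain ⟨C, hC⟩ := hlarge
  choose c hc using hall
  obtain ⟨M, hM⟩ := ((Filter.eventually_cofinite.mp hC).image c).bddAbove
  refine ⟨max 1 (max C M), by positivity, fun i => ?_⟩
  by_cases hi : p i C
  · exact hp i (by simp) hi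
  · exact hp i ((hM ⟨i, hi, rfl⟩).trans (by simp)) (hc i)

theorem stmt11_general {ι : Type*} {n m : ℕ}
    (D A : Matrix (Fin n) (Fin n) ℝ) (B : Matrix (Fin n) (Fin m) ℝ)
    (lam : ι → ℝ) (hlam : ∀ i, lam i ≠ 0)
    (htend : Filter.Tendsto lam Filter.cofinite (Bornology.cobounded ℝ))
    (k : ℕ) (hk : (n - 1) ^ 2 ≤ k) :
    (∀ i, (kalman (lam i • D - A) B).rank = n) ↔
      (∃ R > (0 : ℝ), ∀ a : ι → Fin n → ℝ, (Function.support a).Finite →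
        ∑' i, ∑ x, (a i x) ^ 2 ≤
          R * ∑' i, lam i ^ (2 * k) *
            ∑ y, ((kalman (lam i • D - A) B)ᵀ.mulVec (a i) y) ^ 2) := by
  have hsupport (R : ℝ) := forall_finite_support_tsum_le_iff (ι := ι)
    (q := fun _ v => ∑ x, v x ^ 2)
    (r := fun i v => lam i ^ (2 * k) * ∑ y, ((kalman (lam i • D - A) B)ᵀ *ᵥ v) y ^ 2)
    (by simp) (by simp) R
  have hrank (i : ι) : (kalman (lam i • D - A) B).rank = n ↔ ∃ c, ∀ v, ∑ x, v x ^ 2 ≤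
      c * (lam i ^ (2 * k) * ∑ y, ((kalman (lam i • D - A) B)ᵀ *ᵥ v) y ^ 2) := by
    simpa only [Matrix.rank_transpose, Fintype.card_fin] using
      rank_eq_card_iff_exists_sum_sq_le_mul (L := (kalman (lam i • D - A) B)ᵀ)
        (pow_ne_zero (2 * k) (hlam i))
  simp only [hsupport]
  constructor
  · intro h
    obtain _ | ⟨⟨i₀⟩⟩ := isEmpty_or_nonempty ι
    · exact ⟨1, one_pos, isEmptyElim⟩
    obtain ⟨C, hC⟩ := exists_eventually_sum_sq_le_of_rank_kalman (h i₀) hk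
    refine exists_pos_forall_of_eventually_cofinite (fun i c c' hcc' hc v => (hc v).trans ?_)
      ⟨C, htend.eventually hC⟩ fun i => (hrank i).mp (h i)
    have hweight : 0 ≤ lam i ^ (2 * k) := (even_two_mul k).pow_nonneg (lam i)
    gcongr
  · rintro ⟨R, -, hR⟩ i
    exact (hrank i).mpr ⟨R, hR i⟩

theorem stmt11 {n m : ℕ} (hn : 1 ≤ n) (hm : 1 ≤ m)
    (D A : Matrix (Fin n) (Fin n) ℝ) (B : Matrix (Fin n) (Fin m) ℝ)
    (lam : ℕ → ℝ) (hpos : ∀ i, 0 < lam i) (hmono : StrictMono lam)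
    (htend : Filter.Tendsto lam Filter.atTop Filter.atTop)
    (k : ℕ) (hk : (n - 1) ^ 2 ≤ k) :
    (∀ i, (kalman (lam i • D - A) B).rank = n) ↔
      (∃ R > (0 : ℝ), ∀ a : ℕ → Fin n → ℝ, (Function.support a).Finite →
        ∑' i, ∑ x, (a i x) ^ 2 ≤
          R * ∑' i, lam i ^ (2 * k) *
            ∑ y, ((kalman (lam i • D - A) B)ᵀ.mulVec (a i) y) ^ 2) :=
  stmt11_general D A B lam (fun i => (hpos i).ne')
    (Nat.cofinite_eq_atTop ▸ htend.mono_right IsOrderBornology.atTop_le_cobounded) k hk
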